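/- arXiv:1705.04909 — 7 statements merged into one kernel-verified Lean document; each statement's English description precedes it below -/
import Mathlib

section
/- Under the assumptions of the shared context, if θ ∈ (0,1), then SINR(M) tends to θ/(1−θ) as M → ∞, and consequently R(M) tends to ((τ_c − 2τ_p)/τ_c)·log₂(1/(1−θ)); in particular this limit does not depend on α, p_S, p_R, s_LI, or the fading and estimate-variance parameters. -/
/-!
As a function of the number of antennas `M`, the SINR is a quotient `a * M / (c * M + N)`, where
`a = pS * sSR k * sRD k` and `c = (1 - θ) / θ * a`: the only part of the interference that grows
with `M` is the destination quantization noise (`exists_SINR_eq`). Such a quotient tends to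
`a / c = θ / (1 - θ)` (`tendsto_linear_div_affine`). The rate limit follows by continuity of the
logarithm at `1 + θ / (1 - θ) = 1 / (1 - θ) > 0`.
-/

open Finset Real

/-- Large-`M` approximated per-user SINR (Proposition 1 of the paper).
Here `sSR i` denotes σ_SR(i)² and `sRD i` denotes σ_RD(i)². -/
noncomputable def SINR (K : ℕ) (k : Fin K) (pS pR sLI : ℝ)
    (βSR βRD sSR sRD : Fin K → ℝ) (α θ : ℝ) (M : ℝ) : ℝ :=
  let A := pS * M * sSR k * sRD k
  let B := pS * (βSR k * sRD k + βRD k * sSR k)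
  let C := pS * ∑ j ∈ Finset.univ.erase k,
      (sRD k * βSR j + βRD k * (sSR j) ^ 2 * sRD j / (sSR k * sRD k))
  let D := pR * sLI * sRD k
  let E := sRD k
  let F := ((1 - α) / α) * sRD k * (pS * (sSR k + ∑ i, βSR i) + pR * sLI + 1)
  let G := (pS / (pR * sSR k * sRD k)) * ∑ i, (sSR i) ^ 2 * sRD i
  let H := ((1 - θ) / θ) * pS *
        (M * sSR k * sRD k + sSR k * βRD k * (∑ i, sRD i) / sRD k)
      + ((1 - θ) / θ) * pS * sRD k * ((∑ i, βSR i) + (pR * sLI + 1) / (α * pS))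
      + ((1 - α) * (1 - θ) / (α * θ)) * sRD k * pS * (sSR k + ∑ i, βSR i)
      + ((1 - θ) / θ) * (pS / (pR * sSR k * sRD k)) * ∑ i, (sSR i) ^ 2 * sRD i
  A / (B + C + D + E + F + G + H)

/-- The constant term `N` may have any sign, since it is negligible against `c * M`. -/
lemma tendsto_linear_div_affine (a c N : ℝ) (hc : c ≠ 0) :
    Filter.Tendsto (fun M : ℝ => a * M / (c * M + N)) Filter.atTop (nhds (a / c)) := by
  have h : Filter.Tendsto (fun M : ℝ => a / (c + N * M⁻¹)) Filter.atTop
      (nhds (a / (c + N * 0))) :=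
    tendsto_const_nhds.div
      (tendsto_const_nhds.add (tendsto_const_nhds.mul tendsto_inv_atTop_zero))
      (by simpa using hc)
  rw [mul_zero, add_zero] at h
  refine h.congr' ?_
  filter_upwards [Filter.eventually_gt_atTop 0] with M hM
  have hM' : M ≠ 0 := hM.ne'
  have e : c * M + N = (c + N * M⁻¹) * M := by field_simp
  rw [e, mul_div_mul_right _ _ hM']

/-- Only the numerator and the first term of `H` involve `M`, both linearly. -/
lemma exists_SINR_eq (K : ℕ) (k : Fin K) (pS pR sLI : ℝ)
    (βSR βRD sSR sRD : Fin K → ℝ) (α θ : ℝ) :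
    ∃ N : ℝ, ∀ M : ℝ, SINR K k pS pR sLI βSR βRD sSR sRD α θ M =
      (pS * sSR k * sRD k) * M /
        (((1 - θ) / θ * (pS * sSR k * sRD k)) * M + N) := by
  refine ⟨pS * (βSR k * sRD k + βRD k * sSR k)
    + pS * ∑ j ∈ Finset.univ.erase k,
        (sRD k * βSR j + βRD k * (sSR j) ^ 2 * sRD j / (sSR k * sRD k))
    + pR * sLI * sRD k
    + sRD k
    + ((1 - α) / α) * sRD k * (pS * (sSR k + ∑ i, βSR i) + pR * sLI + 1)
    + (pS / (pR * sSR k * sRD k)) * ∑ i, (sSR i) ^ 2 * sRD i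
    + (((1 - θ) / θ) * pS * (sSR k * βRD k * (∑ i, sRD i) / sRD k)
      + ((1 - θ) / θ) * pS * sRD k * ((∑ i, βSR i) + (pR * sLI + 1) / (α * pS))
      + ((1 - α) * (1 - θ) / (α * θ)) * sRD k * pS * (sSR k + ∑ i, βSR i)
      + ((1 - θ) / θ) * (pS / (pR * sSR k * sRD k)) * ∑ i, (sSR i) ^ 2 * sRD i),
    fun M => ?_⟩
  unfold SINR
  dsimp only
  rw [mul_add (((1 - θ) / θ) * pS) (M * sSR k * sRD k)]
  congr 1
  · ring
  · linear_combination

/-- Corollary 1: as `M → ∞` the approximated SINR converges to `θ/(1−θ)` and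
the approximated rate converges to `((τc − 2τp)/τc)·log₂(1/(1−θ))`; the limit
depends only on the destination ADC resolution `θ`. -/
theorem sinr_rate_limit_large_antennas (K : ℕ) (hK : 1 ≤ K) (k : Fin K)
    (pS pR sLI : ℝ) (βSR βRD sSR sRD : Fin K → ℝ) (α θ τc τp : ℝ)
    (hpS : 0 < pS) (hpR : 0 < pR) (hsLI : 0 < sLI)
    (hβSR : ∀ i, 0 < βSR i) (hβRD : ∀ i, 0 < βRD i)
    (hsSR : ∀ i, 0 < sSR i) (hsRD : ∀ i, 0 < sRD i)
    (hα0 : 0 < α) (hα1 : α ≤ 1) (hθ0 : 0 < θ) (hθ1 : θ < 1)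
    (hτp : 0 < τp) (hτc : 2 * τp < τc) :
    Filter.Tendsto (fun M => SINR K k pS pR sLI βSR βRD sSR sRD α θ M)
      Filter.atTop (nhds (θ / (1 - θ))) ∧
    Filter.Tendsto (fun M => (τc - 2 * τp) / τc *
        Real.logb 2 (1 + SINR K k pS pR sLI βSR βRD sSR sRD α θ M))
      Filter.atTop (nhds ((τc - 2 * τp) / τc * Real.logb 2 (1 / (1 - θ)))) := by
  have hθ : 0 < 1 - θ := sub_pos.mpr hθ1
  have ha : 0 < pS * sSR k * sRD k := mul_pos (mul_pos hpS (hsSR k)) (hsRD k)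
  have h : Filter.Tendsto (fun M => SINR K k pS pR sLI βSR βRD sSR sRD α θ M)
      Filter.atTop (nhds (θ / (1 - θ))) := by
    obtain ⟨N, hN⟩ := exists_SINR_eq K k pS pR sLI βSR βRD sSR sRD α θ
    have hc : (1 - θ) / θ * (pS * sSR k * sRD k) ≠ 0 := (mul_pos (div_pos hθ hθ0) ha).ne'
    have e : pS * sSR k * sRD k / ((1 - θ) / θ * (pS * sSR k * sRD k)) = θ / (1 - θ) := by
      rw [div_mul_cancel_right₀ ha.ne', inv_div]
    simp only [hN]
    rw [← e]
    exact tendsto_linear_div_affine _ _ N hc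
  refine ⟨h, Filter.Tendsto.const_mul _ ?_⟩
  have e : 1 + θ / (1 - θ) = 1 / (1 - θ) := by
    field_simp
    ring
  have h1 := h.const_add 1
  rw [e] at h1
  exact (Real.continuousAt_logb (one_div_pos.mpr hθ).ne').tendsto.comp h1
end

section
/- Under the assumptions of the shared context, if θ ∈ (0,1), then SINR(M) < θ/(1−θ) for every M > 0; i.e., the asymptotic rate limit cannot be exceeded by any finite number of relay antennas. -/
/-!
The term `H` of the denominator contains `((1 - θ) / θ) * A`, where `A` is the numerator.
All remaining terms of the denominator are nonnegative and the noise term `sRD k` is positive,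
so the denominator strictly exceeds `((1 - θ) / θ) * A`, and the ratio is strictly below
`A / (((1 - θ) / θ) * A) = θ / (1 - θ)`.
-/

open Finset Real

/-- The approximated SINR is strictly below the asymptotic limit `θ/(1−θ)`
for every finite number of relay antennas `M > 0`. -/
theorem sinr_lt_limit (K : ℕ) (hK : 1 ≤ K) (k : Fin K)
    (pS pR sLI : ℝ) (βSR βRD sSR sRD : Fin K → ℝ) (α θ : ℝ)
    (hpS : 0 < pS) (hpR : 0 < pR) (hsLI : 0 < sLI)
    (hβSR : ∀ i, 0 < βSR i) (hβRD : ∀ i, 0 < βRD i)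
    (hsSR : ∀ i, 0 < sSR i) (hsRD : ∀ i, 0 < sRD i)
    (hα0 : 0 < α) (hα1 : α ≤ 1) (hθ0 : 0 < θ) (hθ1 : θ < 1) :
    ∀ M : ℝ, 0 < M →
      SINR K k pS pR sLI βSR βRD sSR sRD α θ M < θ / (1 - θ) := by
  intro M hM
  have hk1 := hβSR k
  have hk2 := hβRD k
  have hk3 := hsSR k
  have hk4 := hsRD k
  have ht : 0 < (1 - θ) / θ := div_pos (by linarith) hθ0
  have hα : 0 ≤ 1 - α := by linarith
  have hθ : 0 < 1 - θ := by linarith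
  have hβ : 0 ≤ ∑ i, βSR i := Finset.sum_nonneg fun i _ => (hβSR i).le
  have hs : 0 ≤ ∑ i, sRD i := Finset.sum_nonneg fun i _ => (hsRD i).le
  have hq : 0 ≤ ∑ i, (sSR i) ^ 2 * sRD i :=
    Finset.sum_nonneg fun i _ => mul_nonneg (sq_nonneg _) (hsRD i).le
  have hB : 0 ≤ pS * (βSR k * sRD k + βRD k * sSR k) := by positivity
  have hC : 0 ≤ pS * ∑ j ∈ Finset.univ.erase k,
      (sRD k * βSR j + βRD k * (sSR j) ^ 2 * sRD j / (sSR k * sRD k)) := by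
    refine mul_nonneg hpS.le (Finset.sum_nonneg fun j _ => ?_)
    have h1 := hβSR j
    have h2 := hsRD j
    positivity
  have hD : 0 ≤ pR * sLI * sRD k := by positivity
  have hF : 0 ≤ ((1 - α) / α) * sRD k *
      (pS * (sSR k + ∑ i, βSR i) + pR * sLI + 1) := by positivity
  have hG : 0 ≤ (pS / (pR * sSR k * sRD k)) * ∑ i, (sSR i) ^ 2 * sRD i := by
    positivity
  have hH1 : 0 ≤ ((1 - θ) / θ) * pS * (sSR k * βRD k * (∑ i, sRD i) / sRD k) := by
    positivity
  have hH2 : 0 ≤ ((1 - θ) / θ) * pS * sRD k *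
      ((∑ i, βSR i) + (pR * sLI + 1) / (α * pS)) := by positivity
  have hH3 : 0 ≤ ((1 - α) * (1 - θ) / (α * θ)) * sRD k * pS *
      (sSR k + ∑ i, βSR i) := by positivity
  have hH4 : 0 ≤ ((1 - θ) / θ) * (pS / (pR * sSR k * sRD k)) *
      ∑ i, (sSR i) ^ 2 * sRD i := by positivity
  have hA : 0 < pS * M * sSR k * sRD k := by positivity
  have htA : 0 < ((1 - θ) / θ) * (pS * M * sSR k * sRD k) := mul_pos ht hA
  have hlim : θ / (1 - θ) = (pS * M * sSR k * sRD k) /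
      (((1 - θ) / θ) * (pS * M * sSR k * sRD k)) := by
    field_simp
  rw [hlim]
  unfold SINR
  -- The strict inequality comes from the noise term `E = sRD k > 0`;
  -- all the other terms besides the leading part of `H` are only needed nonnegative.
  refine div_lt_div_of_pos_left hA htA ?_
  rw [mul_add (((1 - θ) / θ) * pS)]
  have hlead : ((1 - θ) / θ) * pS * (M * sSR k * sRD k) =
      ((1 - θ) / θ) * (pS * M * sSR k * sRD k) := by ring
  rw [hlead]
  linarith
end

section
/- Fix constants E_S > 0 and E_R > 0 and, in the shared context, replace p_S by E_S/M and p_R by E_R/M (keeping the estimate variances σ_SR(i)², σ_RD(i)², the fading coefficients, s_LI, α and θ fixed, independent of M). Then as M → ∞, SINR(M) converges to θ / (1 − θ + 1/(α·E_S·σ_SR(k)²) + (Σ_{i=1}^K σ_SR(i)⁴·σ_RD(i)²)/(E_R·σ_SR(k)⁴·σ_RD(k)⁴)). -/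
/-!
With `p_S = E_S / M` and `p_R = E_R / M`, the numerator of the SINR is the constant
`E_S σ_SR(k)² σ_RD(k)²`, and for `M > 0` the denominator is exactly `L + c / M` with `L > 0` and `c`
independent of `M`. Only the thermal noise, the ratio `p_S / p_R`, the products `p_S M` and the
quantization noise they induce contribute to `L`; all other terms carry a bare power and go into
`c / M`. The limit is therefore the constant numerator divided by `L`, which simplifies to the
stated closed form.
-/

open Finset Real

/-- Corollary 2 (power scaling law): with `p_S = E_S/M` and `p_R = E_R/M`,
as `M → ∞` the approximated SINR converges to
`θ / (1 − θ + 1/(α·E_S·σ_SR(k)²) + (Σᵢ σ_SR(i)⁴ σ_RD(i)²)/(E_R·σ_SR(k)⁴·σ_RD(k)⁴))`. -/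
theorem sinr_power_scaling_law (K : ℕ) (hK : 1 ≤ K) (k : Fin K)
    (ES ER sLI : ℝ) (βSR βRD sSR sRD : Fin K → ℝ) (α θ : ℝ)
    (hES : 0 < ES) (hER : 0 < ER) (hsLI : 0 < sLI)
    (hβSR : ∀ i, 0 < βSR i) (hβRD : ∀ i, 0 < βRD i)
    (hsSR : ∀ i, 0 < sSR i) (hsRD : ∀ i, 0 < sRD i)
    (hα0 : 0 < α) (hα1 : α ≤ 1) (hθ0 : 0 < θ) (hθ1 : θ ≤ 1) :
    Filter.Tendsto
      (fun M => SINR K k (ES / M) (ER / M) sLI βSR βRD sSR sRD α θ M)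
      Filter.atTop
      (nhds (θ / (1 - θ + 1 / (α * ES * sSR k)
        + (∑ i, (sSR i) ^ 2 * sRD i) / (ER * (sSR k) ^ 2 * (sRD k) ^ 2)))) := by
  have ha := hsSR k
  have hr := hsRD k
  have hS : 0 < ∑ i, (sSR i) ^ 2 * sRD i :=
    Finset.sum_pos (fun i _ => mul_pos (pow_pos (hsSR i) 2) (hsRD i)) ⟨k, Finset.mem_univ k⟩
  unfold SINR
  generalize (∑ i, (sSR i) ^ 2 * sRD i) = S at hS ⊢
  generalize (∑ j ∈ Finset.univ.erase k,
      (sRD k * βSR j + βRD k * (sSR j) ^ 2 * sRD j / (sSR k * sRD k))) = T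
  generalize (∑ i, βSR i) = b
  generalize (∑ i, sRD i) = R
  generalize sSR k = a at ha ⊢
  generalize sRD k = r at hr ⊢
  generalize βSR k = u
  generalize βRD k = v
  -- `L` is the limit of the denominator, `c` the coefficient of its `1 / M` correction.
  obtain ⟨L, hL⟩ : ∃ L, L = (1 - θ) / θ * (ES * a * r)
      + 1 / θ * (r / α + ES * S / (ER * a * r)) := ⟨_, rfl⟩
  obtain ⟨c, hc⟩ : ∃ c, c = ES * (u * r + v * a) + ES * T + ER * sLI * r
      + (1 - α) / α * r * (ES * (a + b) + ER * sLI)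
      + (1 - θ) / θ * ES * (a * v * R / r)
      + (1 - θ) / θ * r * (ES * b + ER * sLI / α)
      + (1 - α) * (1 - θ) / (α * θ) * r * ES * (a + b) := ⟨_, rfl⟩
  have hθ' : 0 ≤ 1 - θ := by linarith
  have hLpos : 0 < L := by rw [hL]; positivity
  have hlim : θ / (1 - θ + 1 / (α * ES * a) + S / (ER * a ^ 2 * r ^ 2)) = ES * a * r / L := by
    have hden : 0 < 1 - θ + 1 / (α * ES * a) + S / (ER * a ^ 2 * r ^ 2) := by positivity
    rw [div_eq_div_iff hden.ne' hLpos.ne', hL]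
    field_simp
    ring
  have htend : Filter.Tendsto (fun M : ℝ => ES * a * r / (L + c * M⁻¹)) Filter.atTop
      (nhds (ES * a * r / L)) := by
    have h := (tendsto_inv_atTop_zero (𝕜 := ℝ)).const_mul c |>.const_add L
    rw [mul_zero, add_zero] at h
    exact tendsto_const_nhds.div h hLpos.ne'
  rw [hlim]
  refine htend.congr' ?_
  filter_upwards [Filter.eventually_gt_atTop 0] with M hM
  dsimp only
  congr 1
  · field_simp
  · rw [hL, hc]
    field_simp
    ring
end

section
/- In the shared context, fix a quantization parameter q ∈ (0,1) and M ≥ 1, and hold all parameters (in particular the channel-estimate variances σ_SR(i)², σ_RD(i)²) the same in both of the following configurations. Let SINR^R(M) denote SINR(M) evaluated at (α, θ) = (q, 1) (low-resolution ADCs at the relay, perfect ADCs at the destination) and SINR^D(M) denote SINR(M) evaluated at (α, θ) = (1, q) (perfect ADCs at the relay, low-resolution ADCs at the destination). Then SINR^R(M) > SINR^D(M); moreover the two quantities are equal when q = 1. -/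
/-!
With `t = (1 - q) / q > 0`, the two denominators share the quantization-free terms, so it suffices
to compare the distortion terms, `F` at the relay and `H` at the destination. In `H - F` the
contributions of the source powers, loop interference and noise cancel, leaving
`t * (pS * (M - 1) * sSR k * sRD k + pS * sSR k * βRD k * (∑ i, sRD i) / sRD k + G)`,
which is positive because `M ≥ 1` and `G > 0`.
-/

open Finset Real

/-- Corollary 4: with the same quantization level `q ∈ (0,1)`, deploying the
low-resolution ADCs at the relay (`α = q, θ = 1`) yields a strictly larger
SINR than deploying them at the destinations (`α = 1, θ = q`); the two
configurations coincide at `q = 1`. -/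
theorem lowres_adc_better_at_relay (K : ℕ) (hK : 1 ≤ K) (k : Fin K)
    (pS pR sLI : ℝ) (βSR βRD sSR sRD : Fin K → ℝ) (q M : ℝ)
    (hpS : 0 < pS) (hpR : 0 < pR) (hsLI : 0 < sLI)
    (hβSR : ∀ i, 0 < βSR i) (hβRD : ∀ i, 0 < βRD i)
    (hsSR : ∀ i, 0 < sSR i) (hsRD : ∀ i, 0 < sRD i)
    (hq0 : 0 < q) (hq1 : q < 1) (hM : 1 ≤ M) :
    SINR K k pS pR sLI βSR βRD sSR sRD q 1 M >
      SINR K k pS pR sLI βSR βRD sSR sRD 1 q M ∧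
    ∀ q' : ℝ, q' = 1 →
      SINR K k pS pR sLI βSR βRD sSR sRD q' 1 M =
        SINR K k pS pR sLI βSR βRD sSR sRD 1 q' M := by
  have ha := hsSR k
  have hb := hsRD k
  have hc := hβSR k
  have hd := hβRD k
  have hC : 0 ≤ ∑ j ∈ Finset.univ.erase k,
      (sRD k * βSR j + βRD k * (sSR j) ^ 2 * sRD j / (sSR k * sRD k)) :=
    Finset.sum_nonneg fun j _ => by
      have := hβSR j
      have := hsSR j
      have := hsRD j
      positivity
  have hS : 0 ≤ ∑ i, βSR i := Finset.sum_nonneg fun i _ => (hβSR i).le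
  have hT : 0 ≤ ∑ i, sRD i := Finset.sum_nonneg fun i _ => (hsRD i).le
  have hU : 0 < ∑ i, (sSR i) ^ 2 * sRD i :=
    Finset.sum_pos (fun i _ => mul_pos (pow_pos (hsSR i) 2) (hsRD i)) ⟨k, Finset.mem_univ k⟩
  have ht : 0 < (1 - q) / q := div_pos (by linarith) hq0
  refine ⟨?_, fun q' hq' => by rw [hq']⟩
  simp only [SINR, gt_iff_lt, sub_self, zero_div, zero_mul, mul_zero, add_zero, div_one,
    mul_one, one_mul]
  generalize (∑ j ∈ Finset.univ.erase k,
      (sRD k * βSR j + βRD k * (sSR j) ^ 2 * sRD j / (sSR k * sRD k))) = C at *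
  generalize (∑ i, βSR i) = S at *
  generalize (∑ i, sRD i) = T at *
  generalize (∑ i, (sSR i) ^ 2 * sRD i) = U at *
  generalize (1 - q) / q = t at *
  have hM0 : 0 < M := by linarith
  apply div_lt_div_of_pos_left
  · positivity
  · positivity
  · have hX : 0 ≤ t * pS * (sSR k * βRD k * T / sRD k) := by positivity
    have hG : 0 < t * (pS / (pR * sSR k * sRD k)) * U := by positivity
    -- `M ≥ 1` lets the destination's signal-distortion term absorb the relay's.
    have hMM : 0 ≤ t * pS * (sSR k * sRD k) * (M - 1) :=
      mul_nonneg (by positivity) (by linarith)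
    have hP : t * pS * sRD k * (S + (pR * sLI + 1) / pS)
        = t * sRD k * (pS * S + pR * sLI + 1) := by
      field_simp
      ring
    rw [hP]
    linarith
end

section
/- In the shared context with θ = 1 (perfect ADCs at the destination), there exists a constant a > 0 independent of M, namely a = p_S·σ_SR(k)²·σ_RD(k)² / (B + C + D + E + F + G), such that SINR(M) = a·M for every M > 0; consequently R(M) = ((τ_c − 2τ_p)/τ_c)·log₂(1 + a·M) tends to +∞ as M → ∞. -/
/-!
At `θ = 1` the destination-quantization term `H` vanishes, so the denominator of the SINR does
not depend on `M` while the numerator is linear in `M`. The denominator is positive because its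
summands are nonnegative and `σ_RD(k)² > 0`, hence the slope `a` is positive; divergence of the
rate is then divergence of `log₂` along `1 + a·M`, scaled by the positive factor `(τc - 2τp)/τc`.
-/

open Finset Real

/-- With perfect ADCs at the destination (`θ = 1`) the approximated SINR is
linear in `M`: `SINR(M) = a·M` with
`a = p_S·σ_SR(k)²·σ_RD(k)² / (B + C + D + E + F + G) > 0` independent of `M`,
and consequently the approximated rate `((τc−2τp)/τc)·log₂(1 + a·M)` tends to
`+∞` as `M → ∞`. -/
theorem sinr_linear_in_M_of_perfect_dest_adc (K : ℕ) (hK : 1 ≤ K) (k : Fin K)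
    (pS pR sLI : ℝ) (βSR βRD sSR sRD : Fin K → ℝ) (α τc τp : ℝ)
    (hpS : 0 < pS) (hpR : 0 < pR) (hsLI : 0 < sLI)
    (hβSR : ∀ i, 0 < βSR i) (hβRD : ∀ i, 0 < βRD i)
    (hsSR : ∀ i, 0 < sSR i) (hsRD : ∀ i, 0 < sRD i)
    (hα0 : 0 < α) (hα1 : α ≤ 1) (hτp : 0 < τp) (hτc : 2 * τp < τc) :
    ∃ a : ℝ,
      a = pS * sSR k * sRD k /
        (pS * (βSR k * sRD k + βRD k * sSR k)
          + pS * ∑ j ∈ Finset.univ.erase k,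
              (sRD k * βSR j + βRD k * (sSR j) ^ 2 * sRD j / (sSR k * sRD k))
          + pR * sLI * sRD k
          + sRD k
          + ((1 - α) / α) * sRD k *
              (pS * (sSR k + ∑ i, βSR i) + pR * sLI + 1)
          + (pS / (pR * sSR k * sRD k)) * ∑ i, (sSR i) ^ 2 * sRD i) ∧
      0 < a ∧
      (∀ M : ℝ, 0 < M →
        SINR K k pS pR sLI βSR βRD sSR sRD α 1 M = a * M) ∧
      Filter.Tendsto
        (fun M : ℝ => (τc - 2 * τp) / τc * Real.logb 2 (1 + a * M))
        Filter.atTop Filter.atTop := by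
  have hsum : ∀ i, 0 < βRD k * (sSR i) ^ 2 * sRD i / (sSR k * sRD k) := fun i => by
    have := hβRD k; have := hsSR i; have := hsRD i; have := hsSR k; have := hsRD k
    positivity
  have hk1 := hβRD k
  have hk2 := hβSR k
  have hk3 := hsSR k
  have hk4 := hsRD k
  have hC : 0 ≤ ∑ j ∈ Finset.univ.erase k,
      (sRD k * βSR j + βRD k * (sSR j) ^ 2 * sRD j / (sSR k * sRD k)) :=
    Finset.sum_nonneg fun j _ => (add_pos (mul_pos hk4 (hβSR j)) (hsum j)).le
  have hS : 0 ≤ ∑ i, βSR i := Finset.sum_nonneg fun i _ => (hβSR i).le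
  have hG : 0 ≤ ∑ i, (sSR i) ^ 2 * sRD i :=
    Finset.sum_nonneg fun i _ => mul_nonneg (sq_nonneg _) (hsRD i).le
  have hα : 0 ≤ 1 - α := sub_nonneg.mpr hα1
  refine ⟨_, rfl, ?_, ?_, ?_⟩
  · positivity
  · intro M _
    -- At `θ = 1` every term of `H` carries the factor `1 - θ = 0`.
    simp only [SINR, sub_self, zero_div, zero_mul, mul_zero, add_zero]
    ring
  · have hτ : 0 < (τc - 2 * τp) / τc := div_pos (by linarith) (by linarith)
    refine Filter.Tendsto.const_mul_atTop hτ ?_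
    refine (Real.tendsto_logb_atTop one_lt_two).comp ?_
    refine Filter.tendsto_atTop_add_const_left _ _ ?_
    refine Filter.Tendsto.const_mul_atTop ?_ Filter.tendsto_id
    positivity
end

section
/- In the shared context, hold all parameters except p_S fixed (including M, the estimate variances and the fading coefficients). Then the map p_S ↦ SINR is strictly increasing on (0,∞). -/
/-!
Every term of the denominator is affine in `p_S`: the only non-obvious one is
`p_S * ((p_R σ_LI² + 1) / (α p_S))`, in which `p_S` cancels. Hence on `(0, ∞)`
the SINR has the form `a p / (L p + N)` with `a, N > 0` and `L ≥ 0`, and such a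
function is strictly increasing, since
`a q (L p + N) - a p (L q + N) = a N (q - p)`.
-/

open Finset Real

/-- The denominator `p * L + N` has a strictly positive part `N` independent of `p`
(noise, loop interference and their quantization), which is what makes the ratio
strictly increasing. -/
lemma SINR_eq_linear_fractional (K : ℕ) (k : Fin K)
    (pR sLI : ℝ) (βSR βRD sSR sRD : Fin K → ℝ) (α θ M : ℝ)
    (hpR : 0 < pR) (hsLI : 0 < sLI)
    (hβSR : ∀ i, 0 < βSR i) (hβRD : ∀ i, 0 < βRD i)
    (hsSR : ∀ i, 0 < sSR i) (hsRD : ∀ i, 0 < sRD i)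
    (hα0 : 0 < α) (hα1 : α ≤ 1) (hθ0 : 0 < θ) (hθ1 : θ ≤ 1) (hM : 0 < M) :
    ∃ a L N : ℝ, 0 < a ∧ 0 ≤ L ∧ 0 < N ∧ ∀ p : ℝ, 0 < p →
      SINR K k p pR sLI βSR βRD sSR sRD α θ M = p * a / (p * L + N) := by
  have hx := hsSR k
  have hy := hsRD k
  have hbS := hβSR k
  have hbR := hβRD k
  have hα : 0 ≤ 1 - α := sub_nonneg.2 hα1
  have hθ : 0 ≤ 1 - θ := sub_nonneg.2 hθ1
  have hC : 0 ≤ ∑ j ∈ Finset.univ.erase k,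
      (sRD k * βSR j + βRD k * (sSR j) ^ 2 * sRD j / (sSR k * sRD k)) :=
    Finset.sum_nonneg fun j _ => by
      have := hβSR j
      have := hsSR j
      have := hsRD j
      positivity
  have hS : 0 ≤ ∑ i, βSR i := Finset.sum_nonneg fun i _ => (hβSR i).le
  have hR : 0 ≤ ∑ i, sRD i := Finset.sum_nonneg fun i _ => (hsRD i).le
  have hT : 0 ≤ ∑ i, (sSR i) ^ 2 * sRD i :=
    Finset.sum_nonneg fun i _ => mul_nonneg (sq_nonneg _) (hsRD i).le
  unfold SINR
  generalize (∑ j ∈ Finset.univ.erase k,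
      (sRD k * βSR j + βRD k * (sSR j) ^ 2 * sRD j / (sSR k * sRD k))) = c at *
  generalize (∑ i, βSR i) = S at *
  generalize (∑ i, sRD i) = R at *
  generalize (∑ i, (sSR i) ^ 2 * sRD i) = T at *
  refine ⟨M * sSR k * sRD k,
    (βSR k * sRD k + βRD k * sSR k) + c
      + (1 - α) / α * sRD k * (sSR k + S)
      + 1 / (pR * sSR k * sRD k) * T
      + (1 - θ) / θ * (M * sSR k * sRD k + sSR k * βRD k * R / sRD k)
      + (1 - θ) / θ * sRD k * S
      + (1 - α) * (1 - θ) / (α * θ) * sRD k * (sSR k + S)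
      + (1 - θ) / θ * (1 / (pR * sSR k * sRD k)) * T,
    pR * sLI * sRD k + sRD k + (1 - α) / α * sRD k * (pR * sLI + 1)
      + (1 - θ) / θ * sRD k * ((pR * sLI + 1) / α),
    by positivity, by positivity, by positivity, fun p hp => ?_⟩
  have hcancel : (pR * sLI + 1) / α = p * ((pR * sLI + 1) / (α * p)) := by
    field_simp
  rw [hcancel]
  dsimp only
  congr 1 <;> ring

/-- The approximated SINR is strictly increasing in the source transmit
power `p_S` on `(0, ∞)` (all other parameters held fixed). -/
theorem sinr_strictMonoOn_source_power (K : ℕ) (hK : 1 ≤ K) (k : Fin K)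
    (pR sLI : ℝ) (βSR βRD sSR sRD : Fin K → ℝ) (α θ M : ℝ)
    (hpR : 0 < pR) (hsLI : 0 < sLI)
    (hβSR : ∀ i, 0 < βSR i) (hβRD : ∀ i, 0 < βRD i)
    (hsSR : ∀ i, 0 < sSR i) (hsRD : ∀ i, 0 < sRD i)
    (hα0 : 0 < α) (hα1 : α ≤ 1) (hθ0 : 0 < θ) (hθ1 : θ ≤ 1) (hM : 0 < M) :
    StrictMonoOn (fun pS => SINR K k pS pR sLI βSR βRD sSR sRD α θ M)
      (Set.Ioi 0) := by
  obtain ⟨a, L, N, ha, hL, hN, h⟩ := SINR_eq_linear_fractional K k pR sLI βSR βRD sSR sRD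
    α θ M hpR hsLI hβSR hβRD hsSR hsRD hα0 hα1 hθ0 hθ1 hM
  intro p hp q hq hpq
  have hp : 0 < p := hp
  have hq : 0 < q := hq
  simp only [h p hp, h q hq]
  rw [div_lt_div_iff₀ (by positivity) (by positivity)]
  linarith [mul_pos (mul_pos ha hN) (sub_pos.2 hpq)]
end

section
/- In the shared context, hold all parameters except p_R fixed. Then SINR, viewed as a function of p_R on (0,∞), tends to 0 as p_R → 0⁺ and tends to 0 as p_R → +∞. -/
/-!
The numerator of the SINR does not depend on `pR`, and every term of the denominator is
nonnegative. The loop-interference term `D` grows linearly in `pR`, while the relay-noise term `G`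
is a positive multiple of `1 / pR`. So the SINR is nonnegative and bounded by a multiple of `pR`
and by a multiple of `1 / pR` (both from `SINR_bounds`), and both limits follow by squeezing.
-/

open Finset Real

/-- For positive relay power the denominator of the SINR is at least the sum of the
loop-interference term `D` and the relay-noise term `G`, since all other terms are nonnegative. -/
lemma SINR_bounds (K : ℕ) (k : Fin K)
    (pS pR sLI : ℝ) (βSR βRD sSR sRD : Fin K → ℝ) (α θ M : ℝ)
    (hpS : 0 < pS) (hpR : 0 < pR) (hsLI : 0 < sLI)
    (hβSR : ∀ i, 0 < βSR i) (hβRD : ∀ i, 0 < βRD i)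
    (hsSR : ∀ i, 0 < sSR i) (hsRD : ∀ i, 0 < sRD i)
    (hα0 : 0 < α) (hα1 : α ≤ 1) (hθ0 : 0 < θ) (hθ1 : θ ≤ 1) (hM : 0 < M) :
    0 ≤ SINR K k pS pR sLI βSR βRD sSR sRD α θ M ∧
    SINR K k pS pR sLI βSR βRD sSR sRD α θ M ≤ (pS * M * sSR k * sRD k) /
      (pR * sLI * sRD k + (pS / (pR * sSR k * sRD k)) * ∑ i, (sSR i) ^ 2 * sRD i) := by
  have hSRk := hsSR k
  have hRDk := hsRD k
  have hbSRk := hβSR k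
  have hbRDk := hβRD k
  have hα : 0 ≤ 1 - α := sub_nonneg.2 hα1
  have hθ : 0 ≤ 1 - θ := sub_nonneg.2 hθ1
  have hS : 0 < ∑ i, (sSR i) ^ 2 * sRD i :=
    Finset.sum_pos (fun i _ => mul_pos (pow_pos (hsSR i) 2) (hsRD i)) ⟨k, Finset.mem_univ k⟩
  have hSβ : 0 ≤ ∑ i, βSR i := Finset.sum_nonneg fun i _ => (hβSR i).le
  have hSR : 0 ≤ ∑ i, sRD i := Finset.sum_nonneg fun i _ => (hsRD i).le
  have hC : 0 ≤ ∑ j ∈ Finset.univ.erase k,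
      (sRD k * βSR j + βRD k * (sSR j) ^ 2 * sRD j / (sSR k * sRD k)) :=
    Finset.sum_nonneg fun j _ => by
      have := hβSR j
      have := hsRD j
      positivity
  unfold SINR
  generalize (∑ j ∈ Finset.univ.erase k,
      (sRD k * βSR j + βRD k * (sSR j) ^ 2 * sRD j / (sSR k * sRD k))) = c at *
  generalize (∑ i, (sSR i) ^ 2 * sRD i) = g at *
  generalize (∑ i, βSR i) = b at *
  generalize (∑ i, sRD i) = r at *
  generalize 1 - α = a at *
  generalize 1 - θ = t at *
  dsimp only
  refine ⟨by positivity, ?_⟩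
  refine div_le_div_of_nonneg_left (by positivity) (by positivity) ?_
  rw [← sub_nonneg]
  have hrest : 0 ≤ pS * (βSR k * sRD k + βRD k * sSR k) + pS * c + sRD k
      + (a / α) * sRD k * (pS * (sSR k + b) + pR * sLI + 1)
      + ((t / θ) * pS * (M * sSR k * sRD k + sSR k * βRD k * r / sRD k)
      + (t / θ) * pS * sRD k * (b + (pR * sLI + 1) / (α * pS))
      + (a * t / (α * θ)) * sRD k * pS * (sSR k + b)
      + (t / θ) * (pS / (pR * sSR k * sRD k)) * g) := by positivity
  linarith

/-- As a function of the relay power `p_R`, the approximated SINR vanishes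
both as `p_R → 0⁺` and as `p_R → +∞`. -/
theorem sinr_tendsto_zero_in_relay_power (K : ℕ) (hK : 1 ≤ K) (k : Fin K)
    (pS sLI : ℝ) (βSR βRD sSR sRD : Fin K → ℝ) (α θ M : ℝ)
    (hpS : 0 < pS) (hsLI : 0 < sLI)
    (hβSR : ∀ i, 0 < βSR i) (hβRD : ∀ i, 0 < βRD i)
    (hsSR : ∀ i, 0 < sSR i) (hsRD : ∀ i, 0 < sRD i)
    (hα0 : 0 < α) (hα1 : α ≤ 1) (hθ0 : 0 < θ) (hθ1 : θ ≤ 1) (hM : 0 < M) :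
    Filter.Tendsto (fun pR => SINR K k pS pR sLI βSR βRD sSR sRD α θ M)
      (nhdsWithin 0 (Set.Ioi 0)) (nhds 0) ∧
    Filter.Tendsto (fun pR => SINR K k pS pR sLI βSR βRD sSR sRD α θ M)
      Filter.atTop (nhds 0) := by
  have hSRk := hsSR k
  have hRDk := hsRD k
  have hS : 0 < ∑ i, (sSR i) ^ 2 * sRD i :=
    Finset.sum_pos (fun i _ => mul_pos (pow_pos (hsSR i) 2) (hsRD i)) ⟨k, Finset.mem_univ k⟩
  have hb := fun pR hpR => SINR_bounds K k pS pR sLI βSR βRD sSR sRD α θ M hpS hpR hsLI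
    hβSR hβRD hsSR hsRD hα0 hα1 hθ0 hθ1 hM
  generalize (∑ i, (sSR i) ^ 2 * sRD i) = g at *
  constructor
  · -- Dropping the loop-interference term leaves a bound linear in `pR`.
    have hlim : Filter.Tendsto (fun pR : ℝ => M * (sSR k * sRD k) ^ 2 / g * pR)
        (nhdsWithin 0 (Set.Ioi 0)) (nhds 0) := by
      have h : Continuous (fun pR : ℝ => M * (sSR k * sRD k) ^ 2 / g * pR) := by fun_prop
      simpa using (h.tendsto 0).mono_left nhdsWithin_le_nhds
    refine squeeze_zero' ?_ ?_ hlim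
    · filter_upwards [self_mem_nhdsWithin] with pR hpR using (hb pR hpR).1
    · filter_upwards [self_mem_nhdsWithin] with pR hpR
      have hp : 0 < pR := hpR
      calc _ ≤ _ := (hb pR hp).2
        _ ≤ (pS * M * sSR k * sRD k) / ((pS / (pR * sSR k * sRD k)) * g) :=
          div_le_div_of_nonneg_left (by positivity) (by positivity)
            (le_add_of_nonneg_left (by positivity))
        _ = _ := by field_simp
  · -- Dropping the relay-noise term leaves a bound proportional to `pR⁻¹`.
    have hlim : Filter.Tendsto (fun pR : ℝ => pS * M * sSR k / sLI * pR⁻¹)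
        Filter.atTop (nhds 0) := by
      simpa using tendsto_inv_atTop_zero.const_mul (pS * M * sSR k / sLI)
    refine squeeze_zero' ?_ ?_ hlim
    · filter_upwards [Filter.eventually_gt_atTop 0] with pR hp using (hb pR hp).1
    · filter_upwards [Filter.eventually_gt_atTop 0] with pR hp
      calc _ ≤ _ := (hb pR hp).2
        _ ≤ (pS * M * sSR k * sRD k) / (pR * sLI * sRD k) :=
          div_le_div_of_nonneg_left (by positivity) (by positivity)
            (le_add_of_nonneg_right (by positivity))
        _ = _ := by field_simp
end
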